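/- Let p > 1 and μ ∈ 𝒲_p(ℝ²). Then the following are equivalent: (i) μ is a Dirac mass, i.e. μ = δ_x for some x ∈ ℝ²; (ii) for every ν ∈ 𝒲_p(ℝ²) there exists η ∈ 𝒲_p(ℝ²) such that d_{W_p}(μ, ν) = d_{W_p}(ν, η) = (1/2)·d_{W_p}(μ, η). -/

import Mathlib

open MeasureTheory

/-- The `p`-Wasserstein distance between two measures, defined as the infimum over all
couplings `π` of `μ` and `ν` of `(∬ d(x,y)^p dπ)^(1/p)`. -/
noncomputable def Wdist {X : Type*} [MeasurableSpace X] [PseudoMetricSpace X] (p : ℝ)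
    (μ ν : Measure X) : ℝ :=
  (⨅ π ∈ {π : Measure (X × X) | π.map Prod.fst = μ ∧ π.map Prod.snd = ν},
    (∫⁻ q, edist q.1 q.2 ^ p ∂π) ^ (1 / p)).toReal

/-- The `p`-Wasserstein space over `X`: Borel probability measures on `X` with finite
`p`-th moment. -/
def WSet (X : Type*) [MeasurableSpace X] [PseudoMetricSpace X] (p : ℝ) : Set (Measure X) :=
  {μ | IsProbabilityMeasure μ ∧ ∃ x₀ : X, ∫⁻ x, edist x x₀ ^ p ∂μ < ⊤}

/-- An isometry of the underlying metric space: a distance-preserving bijection. -/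
def IsIsom {X : Type*} [PseudoMetricSpace X] (T : X → X) : Prop :=
  Function.Bijective T ∧ ∀ x y, dist (T x) (T y) = dist x y

/-- An isometry of the `p`-Wasserstein space over `X`: a bijection of the space of
probability measures with finite `p`-th moment preserving the Wasserstein distance. -/
def IsWIsometry (X : Type*) [MeasurableSpace X] [PseudoMetricSpace X] (p : ℝ)
    (Φ : Measure X → Measure X) : Prop :=
  Set.BijOn Φ (WSet X p) (WSet X p) ∧
    ∀ μ ∈ WSet X p, ∀ ν ∈ WSet X p, Wdist p (Φ μ) (Φ ν) = Wdist p μ ν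

/-- The (topological) support of a measure. -/
def msupport {X : Type*} [TopologicalSpace X] [MeasurableSpace X] (μ : Measure X) : Set X :=
  {x | ∀ U : Set X, IsOpen U → x ∈ U → μ U ≠ 0}

def diagLine (ε a : ℝ) : Set (ℝ × ℝ) := {z | z.2 = ε * z.1 + a}

def Lplus : Set (ℝ × ℝ) := {z | z.2 = z.1}

def Lminus : Set (ℝ × ℝ) := {z | z.2 = -z.1}

/-- The closed square `Q = [-1,1]²`. -/
abbrev Qs : Set (ℝ × ℝ) := Set.Icc (-1, -1) (1, 1)

def LplusQ : Set ↥Qs := {q | (q : ℝ × ℝ).2 = (q : ℝ × ℝ).1}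

def LminusQ : Set ↥Qs := {q | (q : ℝ × ℝ).2 = -(q : ℝ × ℝ).1}


open scoped ENNReal NNReal

/-- Extended-real version of the Wasserstein distance. -/
noncomputable def EW (p : ℝ) (μ ν : Measure (ℝ × ℝ)) : ℝ≥0∞ :=
  ⨅ π ∈ {π : Measure ((ℝ × ℝ) × (ℝ × ℝ)) | π.map Prod.fst = μ ∧ π.map Prod.snd = ν},
    (∫⁻ q, edist q.1 q.2 ^ p ∂π) ^ (1 / p)

lemma Wdist_eq (p : ℝ) (μ ν : Measure (ℝ × ℝ)) : Wdist p μ ν = (EW p μ ν).toReal := rfl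

lemma EW_le (p : ℝ) (μ ν : Measure (ℝ × ℝ)) (π : Measure ((ℝ × ℝ) × (ℝ × ℝ)))
    (h1 : π.map Prod.fst = μ) (h2 : π.map Prod.snd = ν) :
    EW p μ ν ≤ (∫⁻ q, edist q.1 q.2 ^ p ∂π) ^ (1 / p) :=
  iInf₂_le π ⟨h1, h2⟩

lemma ae_of_map_dirac {π : Measure ((ℝ × ℝ) × (ℝ × ℝ))} {y : ℝ × ℝ}
    {f : (ℝ × ℝ) × (ℝ × ℝ) → ℝ × ℝ} (hf : Measurable f)
    (h : π.map f = Measure.dirac y) : ∀ᵐ q ∂π, f q = y := by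
  have h1 : ∀ᵐ z ∂(π.map f), z = y := by
    rw [h, ae_dirac_eq]
    exact Filter.eventually_pure.2 rfl
  exact ae_of_ae_map hf.aemeasurable h1

lemma meas_moment (p : ℝ) (y : ℝ × ℝ) : Measurable (fun x : ℝ × ℝ => edist x y ^ p) :=
  (measurable_id.edist measurable_const).pow_const p

lemma EW_dirac_right (p : ℝ) (μ : Measure (ℝ × ℝ)) [IsProbabilityMeasure μ] (y : ℝ × ℝ) :
    EW p μ (Measure.dirac y) = (∫⁻ x, edist x y ^ p ∂μ) ^ (1 / p) := by
  have key : ∀ π : Measure ((ℝ × ℝ) × (ℝ × ℝ)), π.map Prod.fst = μ →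
      π.map Prod.snd = Measure.dirac y →
      ∫⁻ q, edist q.1 q.2 ^ p ∂π = ∫⁻ x, edist x y ^ p ∂μ := by
    intro π h1 h2
    rw [← h1, lintegral_map (meas_moment p y) measurable_fst]
    apply lintegral_congr_ae
    filter_upwards [ae_of_map_dirac measurable_snd h2] with q hq
    rw [hq]
  apply le_antisymm
  · have h1 : (μ.prod (Measure.dirac y)).map Prod.fst = μ := by simp
    have h2 : (μ.prod (Measure.dirac y)).map Prod.snd = Measure.dirac y := by simp
    refine (EW_le p _ _ _ h1 h2).trans ?_
    rw [key _ h1 h2]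
  · refine le_iInf₂ fun π hπ => ?_
    rw [key π hπ.1 hπ.2]

lemma EW_dirac_left (p : ℝ) (μ : Measure (ℝ × ℝ)) [IsProbabilityMeasure μ] (y : ℝ × ℝ) :
    EW p (Measure.dirac y) μ = (∫⁻ x, edist x y ^ p ∂μ) ^ (1 / p) := by
  have key : ∀ π : Measure ((ℝ × ℝ) × (ℝ × ℝ)), π.map Prod.fst = Measure.dirac y →
      π.map Prod.snd = μ →
      ∫⁻ q, edist q.1 q.2 ^ p ∂π = ∫⁻ x, edist x y ^ p ∂μ := by
    intro π h1 h2
    rw [← h2, lintegral_map (meas_moment p y) measurable_snd]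
    apply lintegral_congr_ae
    filter_upwards [ae_of_map_dirac measurable_fst h1] with q hq
    rw [hq, edist_comm]
  apply le_antisymm
  · have h1 : ((Measure.dirac y).prod μ).map Prod.fst = Measure.dirac y := by simp
    have h2 : ((Measure.dirac y).prod μ).map Prod.snd = μ := by simp
    refine (EW_le p _ _ _ h1 h2).trans ?_
    rw [key _ h1 h2]
  · refine le_iInf₂ fun π hπ => ?_
    rw [key π hπ.1 hπ.2]

lemma moment_lt_top {p : ℝ} (hp : 1 < p) {μ : Measure (ℝ × ℝ)} (hμ : μ ∈ WSet (ℝ × ℝ) p)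
    (y : ℝ × ℝ) : ∫⁻ x, edist x y ^ p ∂μ < ⊤ := by
  obtain ⟨hP, x₀, hx⟩ := hμ
  calc ∫⁻ x, edist x y ^ p ∂μ
      ≤ ∫⁻ x, (2 : ℝ≥0∞) ^ (p - 1) * (edist x x₀ ^ p + edist x₀ y ^ p) ∂μ := by
        apply lintegral_mono
        intro x
        exact (ENNReal.rpow_le_rpow (edist_triangle x x₀ y) (by linarith)).trans
          (ENNReal.rpow_add_le_mul_rpow_add_rpow _ _ hp.le)
    _ = (2 : ℝ≥0∞) ^ (p - 1) * (∫⁻ x, edist x x₀ ^ p ∂μ + edist x₀ y ^ p) := by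
        rw [lintegral_const_mul' _ _ (ENNReal.rpow_ne_top_of_nonneg (by linarith) (by simp)),
          lintegral_add_right _ measurable_const]
        simp
    _ < ⊤ := by
        refine ENNReal.mul_lt_top (ENNReal.rpow_lt_top_of_nonneg (by linarith) (by simp))
          (ENNReal.add_lt_top.2 ⟨hx, ENNReal.rpow_lt_top_of_nonneg (by linarith) (edist_ne_top _ _)⟩)

lemma strict_ineq {p : ℝ} (hp : 1 < p) {a b : ℝ≥0∞} (ha : a ≠ ⊤) (hb : b ≠ ⊤) (hab : a ≠ b) :
    (a + b) ^ p < (2 : ℝ≥0∞) ^ (p - 1) * (a ^ p + b ^ p) := by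
  lift a to ℝ≥0 using ha
  lift b to ℝ≥0 using hb
  have hab' : (a : ℝ) ≠ b := by
    intro h; exact hab (by rw [NNReal.coe_injective h])
  have h0 : (0 : ℝ) ≤ p := by linarith
  have h1 := (strictConvexOn_rpow hp).2 (x := (a : ℝ)) a.2 (y := (b : ℝ)) b.2 hab'
    (show (0 : ℝ) < 1 / 2 by norm_num) (show (0 : ℝ) < 1 / 2 by norm_num) (by norm_num)
  simp only [smul_eq_mul] at h1
  have h2 : ((a : ℝ) + b) ^ p < (2 : ℝ) ^ (p - 1) * ((a : ℝ) ^ p + (b : ℝ) ^ p) := by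
    have e : (1 / 2 * (a : ℝ) + 1 / 2 * b) = ((a : ℝ) + b) / 2 := by ring
    rw [e, Real.div_rpow (by positivity) (by norm_num)] at h1
    have h2p : (0 : ℝ) < 2 ^ p := by positivity
    rw [div_lt_iff₀ h2p] at h1
    rw [Real.rpow_sub (by norm_num), Real.rpow_one]
    linarith
  have h3 : (a + b) ^ p < (2 : ℝ≥0) ^ (p - 1) * (a ^ p + b ^ p) := by
    rw [← NNReal.coe_lt_coe]
    push_cast
    exact h2
  have h4 : (((a + b) ^ p : ℝ≥0) : ℝ≥0∞) < (((2 : ℝ≥0) ^ (p - 1) * (a ^ p + b ^ p) : ℝ≥0) : ℝ≥0∞) :=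
    ENNReal.coe_lt_coe.2 h3
  rw [ENNReal.coe_rpow_of_nonneg _ h0, ENNReal.coe_mul, ENNReal.coe_add, ENNReal.coe_add,
    ENNReal.coe_rpow_of_nonneg _ h0, ENNReal.coe_rpow_of_nonneg _ h0,
    ENNReal.coe_rpow_of_nonneg _ (by linarith : 0 ≤ p - 1)] at h4
  exact h4

lemma forward {p : ℝ} (hp : 1 < p) (x : ℝ × ℝ) (ν : Measure (ℝ × ℝ))
    (hν : ν ∈ WSet (ℝ × ℝ) p) : ∃ η ∈ WSet (ℝ × ℝ) p,
      Wdist p (Measure.dirac x) ν = Wdist p ν η ∧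
      Wdist p ν η = (1 / 2) * Wdist p (Measure.dirac x) η := by
  have h0 : (0 : ℝ) < p := by linarith
  have := hν.1
  set T : ℝ × ℝ → ℝ × ℝ := fun y => y + (y - x) with hT
  have hTm : Measurable T := by fun_prop
  have hd1 : ∀ y, edist y (T y) = edist y x := by
    intro y
    rw [edist_comm, edist_dist, edist_dist, hT, dist_eq_norm, dist_eq_norm]; simp
  have hd2 : ∀ y, edist (T y) x = 2 * edist y x := by
    intro y
    have e : T y - x = (2 : ℝ) • (y - x) := by
      ext <;> simp [hT] <;> ring
    rw [edist_dist, edist_dist, dist_eq_norm, dist_eq_norm, e, norm_smul,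
      ENNReal.ofReal_mul (by positivity)]
    simp
  have hfin := moment_lt_top hp hν x
  have hmom : ∫⁻ z, edist z x ^ p ∂(ν.map T) = 2 ^ p * ∫⁻ y, edist y x ^ p ∂ν := by
    rw [lintegral_map (meas_moment p x) hTm, ← lintegral_const_mul _ (meas_moment p x)]
    refine lintegral_congr fun y => ?_
    rw [hd2, ENNReal.mul_rpow_of_nonneg _ _ h0.le]
  have hηP : IsProbabilityMeasure (ν.map T) := Measure.isProbabilityMeasure_map hTm.aemeasurable
  have hη : ν.map T ∈ WSet (ℝ × ℝ) p := by
    refine ⟨hηP, x, ?_⟩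
    rw [hmom]
    exact ENNReal.mul_lt_top (ENNReal.rpow_lt_top_of_nonneg h0.le (by simp)) hfin
  set A : ℝ≥0∞ := (∫⁻ y, edist y x ^ p ∂ν) ^ (1 / p) with hA
  have hAfin : A ≠ ⊤ := ENNReal.rpow_ne_top_of_nonneg (by positivity) hfin.ne
  have hM : (∫⁻ z, edist z x ^ p ∂(ν.map T)) ^ (1 / p) = 2 * A := by
    rw [hmom, ENNReal.mul_rpow_of_nonneg _ _ (by positivity), ← ENNReal.rpow_mul,
      mul_one_div_cancel h0.ne', ENNReal.rpow_one]
  have hE : EW p ν (ν.map T) = A := by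
    apply le_antisymm
    · have hm : Measurable (fun y => (y, T y)) := measurable_id.prodMk hTm
      refine (EW_le p _ _ (ν.map (fun y => (y, T y))) ?_ ?_).trans ?_
      · rw [Measure.map_map measurable_fst hm]; exact Measure.map_id
      · rw [Measure.map_map measurable_snd hm]; rfl
      · rw [lintegral_map ((measurable_fst.edist measurable_snd).pow_const p) hm]
        simp only [hd1]
        exact le_rfl
    · refine le_iInf₂ fun π hπ => ?_
      obtain ⟨h1, h2⟩ := hπ
      have hmk := ENNReal.lintegral_Lp_add_le (μ := π)
        (f := fun q => edist q.1 x) (g := fun q => edist q.1 q.2)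
        (measurable_fst.edist measurable_const).aemeasurable
        (measurable_fst.edist measurable_snd).aemeasurable hp.le
      have e1 : ∫⁻ q, edist q.1 x ^ p ∂π = ∫⁻ y, edist y x ^ p ∂ν := by
        rw [← h1, lintegral_map (meas_moment p x) measurable_fst]
      have e2 : ∫⁻ q, edist q.2 x ^ p ∂π = ∫⁻ z, edist z x ^ p ∂(ν.map T) := by
        rw [← h2, lintegral_map (meas_moment p x) measurable_snd]
      have h3 : 2 * A ≤ A + (∫⁻ q, edist q.1 q.2 ^ p ∂π) ^ (1 / p) := by
        rw [← hM, ← e2]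
        refine le_trans ?_ (hmk.trans_eq (by rw [e1]))
        refine ENNReal.rpow_le_rpow (lintegral_mono fun q => ?_) (by positivity)
        refine ENNReal.rpow_le_rpow ?_ h0.le
        simp only [Pi.add_apply]
        rw [add_comm, edist_comm q.1 q.2]
        exact edist_triangle _ _ _
      rw [two_mul] at h3
      exact (ENNReal.add_le_add_iff_left hAfin).1 h3
  refine ⟨ν.map T, hη, ?_, ?_⟩
  · rw [Wdist_eq, Wdist_eq, hE, EW_dirac_left]
  · rw [Wdist_eq, Wdist_eq, hE, EW_dirac_left, hM]
    simp

lemma backward {p : ℝ} (hp : 1 < p) (μ η : Measure (ℝ × ℝ)) (hμ : μ ∈ WSet (ℝ × ℝ) p)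
    (hη : η ∈ WSet (ℝ × ℝ) p) (y : ℝ × ℝ)
    (h1 : Wdist p μ (Measure.dirac y) = Wdist p (Measure.dirac y) η)
    (h2 : Wdist p (Measure.dirac y) η = (1 / 2) * Wdist p μ η) :
    ∃ c : ℝ≥0∞, ∀ᵐ x ∂μ, edist x y = c := by
  have h0 : (0 : ℝ) < p := by linarith
  have := hμ.1
  have := hη.1
  have hfμ := moment_lt_top hp hμ y
  have hfη := moment_lt_top hp hη y
  rw [Wdist_eq, Wdist_eq, EW_dirac_left, EW_dirac_right] at h1
  rw [Wdist_eq, Wdist_eq, EW_dirac_left] at h2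
  have hip : 0 < 1 / p := by positivity
  rw [ENNReal.toReal_eq_toReal_iff' (ENNReal.rpow_ne_top_of_nonneg hip.le hfμ.ne)
    (ENNReal.rpow_ne_top_of_nonneg hip.le hfη.ne)] at h1
  have h1' : ∫⁻ x, edist x y ^ p ∂μ = ∫⁻ x, edist x y ^ p ∂η :=
    ENNReal.rpow_left_injective hip.ne' h1
  set B := ∫⁻ x, edist x y ^ p ∂η with hB
  set G : (ℝ × ℝ) × (ℝ × ℝ) → ℝ≥0∞ :=
    fun q => (2 : ℝ≥0∞) ^ (p - 1) * (edist q.1 y ^ p + edist q.2 y ^ p) with hG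
  have hGm : Measurable G := by
    have ha : Measurable (fun q : (ℝ × ℝ) × (ℝ × ℝ) => edist q.1 y ^ p) :=
      (meas_moment p y).comp measurable_fst
    have hb : Measurable (fun q : (ℝ × ℝ) × (ℝ × ℝ) => edist q.2 y ^ p) :=
      (meas_moment p y).comp measurable_snd
    exact (ha.add hb).const_mul _
  have hle1 : ∀ q : (ℝ × ℝ) × (ℝ × ℝ), edist q.1 q.2 ^ p ≤ (edist q.1 y + edist q.2 y) ^ p := by
    intro q
    refine ENNReal.rpow_le_rpow ?_ h0.le
    rw [edist_comm q.2 y]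
    exact edist_triangle _ _ _
  have hle : ∀ q : (ℝ × ℝ) × (ℝ × ℝ), edist q.1 q.2 ^ p ≤ G q := fun q =>
    (hle1 q).trans (ENNReal.rpow_add_le_mul_rpow_add_rpow _ _ hp.le)
  have hGint : ∫⁻ q, G q ∂(μ.prod η) = 2 ^ p * B := by
    have ha : ∫⁻ q, edist q.1 y ^ p ∂(μ.prod η) = B := by
      rw [← h1']
      conv_rhs => rw [← (measurePreserving_fst (μ := μ) (ν := η)).map_eq]
      rw [lintegral_map (meas_moment p y) measurable_fst]
    have hb : ∫⁻ q, edist q.2 y ^ p ∂(μ.prod η) = B := by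
      rw [hB]
      conv_rhs => rw [← (measurePreserving_snd (μ := μ) (ν := η)).map_eq]
      rw [lintegral_map (meas_moment p y) measurable_snd]
    have hfm : Measurable (fun q : (ℝ × ℝ) × (ℝ × ℝ) => edist q.1 y ^ p) :=
      (meas_moment p y).comp measurable_fst
    rw [hG, lintegral_const_mul' _ _ (ENNReal.rpow_ne_top_of_nonneg (by linarith) (by simp)),
      lintegral_add_left hfm, ha, hb, ← two_mul, ← mul_assoc]
    congr 1
    conv_lhs => rw [← ENNReal.rpow_one 2, ← ENNReal.rpow_mul, ← ENNReal.rpow_add _ _ (by simp) (by simp)]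
    congr 1
    ring
  have hGtop : 2 ^ p * B ≠ ⊤ :=
    (ENNReal.mul_lt_top (ENNReal.rpow_lt_top_of_nonneg h0.le (by simp)) hfη).ne
  have hcost : ∫⁻ q, edist q.1 q.2 ^ p ∂(μ.prod η) ≠ ⊤ :=
    ne_top_of_le_ne_top hGtop ((lintegral_mono hle).trans_eq hGint)
  have hEle := EW_le p μ η (μ.prod η) (by simp) (by simp)
  have hEtop : EW p μ η ≠ ⊤ :=
    ne_top_of_le_ne_top (ENNReal.rpow_ne_top_of_nonneg hip.le hcost) hEle
  have hEeq : EW p μ η = 2 * B ^ (1 / p) := by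
    rw [← ENNReal.toReal_eq_toReal_iff' hEtop
      (ENNReal.mul_ne_top (by simp) (ENNReal.rpow_ne_top_of_nonneg hip.le hfη.ne)),
      ENNReal.toReal_mul, h2]
    simp
  have hge : 2 ^ p * B ≤ ∫⁻ q, edist q.1 q.2 ^ p ∂(μ.prod η) := by
    have h3 := ENNReal.rpow_le_rpow hEle h0.le
    rw [hEeq, ENNReal.mul_rpow_of_nonneg _ _ h0.le, ← ENNReal.rpow_mul, ← ENNReal.rpow_mul,
      one_div_mul_cancel h0.ne', ENNReal.rpow_one, ENNReal.rpow_one] at h3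
    exact h3
  have hae := ae_eq_of_ae_le_of_lintegral_le (μ := μ.prod η) (Filter.Eventually.of_forall hle) hcost
    hGm.aemeasurable (hGint.le.trans hge)
  have hae2 : ∀ᵐ q ∂(μ.prod η), edist q.1 y = edist q.2 y := by
    filter_upwards [hae] with q hq
    by_contra hne
    have := (hle1 q).trans_lt (strict_ineq hp (edist_ne_top _ _) (edist_ne_top _ _) hne)
    exact this.ne hq
  have hae3 := Measure.ae_ae_of_ae_prod hae2
  obtain ⟨x₁, hx₁⟩ := hae3.exists
  refine ⟨edist x₁ y, ?_⟩
  filter_upwards [hae3] with x hx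
  obtain ⟨z, hz1, hz2⟩ := (hx.and hx₁).exists
  exact hz1.trans hz2.symm

/-- For `p > 1`, a measure `μ ∈ 𝒲_p(ℝ², d_m)` is a Dirac mass if and only if it admits
a symmetric point with respect to every other measure. -/
theorem dirac_characterization (p : ℝ) (hp : 1 < p) (μ : Measure (ℝ × ℝ))
    (hμ : μ ∈ WSet (ℝ × ℝ) p) :
    (∃ x : ℝ × ℝ, μ = Measure.dirac x) ↔
    (∀ ν ∈ WSet (ℝ × ℝ) p, ∃ η ∈ WSet (ℝ × ℝ) p,
      Wdist p μ ν = Wdist p ν η ∧ Wdist p ν η = (1 / 2) * Wdist p μ η) := by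
  constructor
  · rintro ⟨x, rfl⟩ ν hν
    exact forward hp x ν hν
  · intro h
    have := hμ.1
    obtain ⟨y, hy⟩ := Measure.nonempty_support (IsProbabilityMeasure.ne_zero μ)
    have hδ : Measure.dirac y ∈ WSet (ℝ × ℝ) p := by
      refine ⟨inferInstance, y, ?_⟩
      rw [lintegral_dirac]
      simp [ENNReal.zero_rpow_of_pos (by linarith : 0 < p)]
    obtain ⟨η, hη, h1, h2⟩ := h _ hδ
    obtain ⟨c, hc⟩ := backward hp μ η hμ hη y h1 h2
    have hcl : IsClosed {x : ℝ × ℝ | edist x y = c} :=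
      isClosed_eq (continuous_id.edist continuous_const) continuous_const
    have hy2 : edist y y = c := Measure.support_subset_of_isClosed hcl hc hy
    rw [edist_self] at hy2
    refine ⟨y, ?_⟩
    have hid : (fun x : ℝ × ℝ => x) =ᵐ[μ] fun _ => y := by
      filter_upwards [hc] with x hx
      exact edist_eq_zero.1 (hx.trans hy2.symm)
    have h3 : μ.map (fun x : ℝ × ℝ => x) = μ.map (fun _ => y) := Measure.map_congr hid
    rw [Measure.map_id', Measure.map_const] at h3
    simpa using h3
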